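/- Suppose f satisfies the (2r,4r)-restricted strong convexity and smoothness properties with parameter δ ∈ [0,1). Fix Y* ∈ ℝ^{p×r}_*, set X* := Y*Y*ᵀ, κ* := σ_1(Y*)/σ_r(Y*) and N := sup{⟨B, ∇f(X*)⟩ : rank(B) ≤ r, ‖B‖_F ≤ 1}, and let μ, α, β, γ ≥ 0. Let Y ∈ ℝ^{p×r}_* satisfy d(Y,Y*) > μσ_r(Y*)/κ*, ‖2(YYᵀ − X*)Y‖_F ≤ α·μ·σ_r(Y*)³/(4κ*), ‖Y‖ ≤ β‖Y*‖ and ‖YYᵀ‖_F ≤ γ‖X*‖_F. Let Q ∈ O(r) minimize O ↦ ‖Y − Y*O‖_F over O(r) and set θ := Y − Y*Q. Then ∇²f(YYᵀ)[Yθᵀ + θYᵀ, Yθᵀ + θYᵀ] + 2⟨∇f(YYᵀ), θθᵀ⟩ ≤ [ (α − 2(√2 − 1))·σ_r(Y*)² + 2δ(2β²‖Y*‖² + (1+γ)‖X*‖_F) + 2N ]·‖θ‖²_F. In particular, if α < 2(√2 − 1), δ ≤ (2(√2 − 1) − α)·σ_r(Y*)²/(8(2β²‖Y*‖² + (1+γ)‖X*‖_F))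 and N ≤ (2(√2 − 1) − α)·σ_r(Y*)²/8, then this quadratic form is at most ((α − 2(√2 − 1))/2)·σ_r(Y*)²·‖θ‖²_F < 0, so the lifted Riemannian Hessian of h at Y has at least one negative eigenvalue with escaping direction θ. -/

import Mathlib

open Matrix

/-- Trace inner product `⟨A,B⟩ = tr(AᵀB)`. -/
noncomputable def trInner {m n : ℕ} (A B : Matrix (Fin m) (Fin n) ℝ) : ℝ :=
  ∑ i, ∑ j, A i j * B i j

/-- Frobenius norm. -/
noncomputable def frob {m n : ℕ} (A : Matrix (Fin m) (Fin n) ℝ) : ℝ :=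
  Real.sqrt (∑ i, ∑ j, (A i j) ^ 2)

open scoped Classical in
/-- The `i`-th largest eigenvalue (1-indexed, `1 ≤ i ≤ n`) of a Hermitian matrix; junk value 0
otherwise. -/
noncomputable def eigVal {n : ℕ} (A : Matrix (Fin n) (Fin n) ℝ) (i : ℕ) : ℝ :=
  if hA : A.IsHermitian then
    if h : n - i < n then hA.eigenvalues (Tuple.sort hA.eigenvalues ⟨n - i, h⟩) else 0
  else 0

/-- The `i`-th largest singular value (1-indexed) of `Y`, so `sval Y 1 = ‖Y‖` (spectral norm)
and `sval Y r` is the least singular value. -/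
noncomputable def sval {p r : ℕ} (Y : Matrix (Fin p) (Fin r) ℝ) (i : ℕ) : ℝ :=
  Real.sqrt (eigVal (Yᵀ * Y) i)

/-- `Q` is an orthogonal matrix. -/
def IsOrtho {r : ℕ} (Q : Matrix (Fin r) (Fin r) ℝ) : Prop := Qᵀ * Q = 1

/-- The quotient distance `d(Y₁,Y₂) = min_{Q ∈ O(r)} ‖Y₂Q − Y₁‖_F`. -/
noncomputable def dOrth {p r : ℕ} (Y₁ Y₂ : Matrix (Fin p) (Fin r) ℝ) : ℝ :=
  sInf {c | ∃ Q : Matrix (Fin r) (Fin r) ℝ, IsOrtho Q ∧ c = frob (Y₂ * Q - Y₁)}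

/-!
Align `Y` with `Z := Ystar * Q`, which satisfies `Z * Zᵀ = X`, and put `θ = Y - Z`, `M = Y * Yᵀ - X`
and `S = θ * θᵀ`, so that `Y * θᵀ + θ * Yᵀ = M + S`. Optimality of `Q`, tested against rotations
`exp (t A)` with `A` skew-symmetric and against reflections, makes `Zᵀ * Y` symmetric positive
semidefinite.

For the model objective `‖· - X‖² / 2` the lifted Hessian at `Y` in direction `θ` is
`‖M + S‖² + 2⟪M, S⟫ = 4⟪M, M + S⟫ - 3‖M‖² + ‖S‖²`, and `⟪M, M + S⟫ = ⟪2 M Y, θ⟫` is controlled by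
the gradient of the model at `Y`. Positive semidefiniteness of `Zᵀ * Y` gives `‖S‖² ≤ 2‖M‖²` and
`2(√2 - 1)‖Z * θᵀ‖² ≤ ‖M‖²`, so the remaining terms are at most `-2(√2 - 1)‖Z * θᵀ‖²`, which is the
negative curvature. A general `f` differs from the model by a function whose Hessian is bounded by
`δ` on the relevant low-rank matrices, together with the linear term of size `N` coming from its
gradient at `X`.
-/

open scoped MatrixOrder RealInnerProductSpace

section SecondOrder

lemma abs_sub_sub_le_half_of_abs_deriv_le {g g' g'' : ℝ → ℝ} {c : ℝ}
    (hg : ∀ t, HasDerivAt g (g' t) t) (hg' : ∀ t, HasDerivAt g' (g'' t) t)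
    (hbound : ∀ t, |g'' t| ≤ c) : |g 1 - g 0 - g' 0| ≤ c / 2 := by
  have hslope : ∀ t ∈ Set.Icc (0 : ℝ) 1, |g' t - g' 0| ≤ c * t := by
    simpa using norm_image_sub_le_of_norm_deriv_le_segment' (a := (0 : ℝ)) (b := 1)
      (fun t _ => (hg' t).hasDerivWithinAt) (fun t _ => hbound t)
  have hrem : ∀ t, HasDerivAt (fun t => g t - g 0 - g' 0 * t) (g' t - g' 0) t := fun t =>
    (((hg t).sub_const (g 0)).sub ((hasDerivAt_id t).const_mul (g' 0))).congr_deriv (by simp)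
  have hquad : ∀ t, HasDerivAt (fun t => c / 2 * t ^ 2) (c * t) t := fun t =>
    ((hasDerivAt_pow 2 t).const_mul (c / 2)).congr_deriv (by ring)
  have := image_norm_le_of_norm_deriv_right_le_deriv_boundary
    (fun t _ => (hrem t).continuousAt.continuousWithinAt) (fun t _ => (hrem t).hasDerivWithinAt)
    (by simp) hquad (fun t ht => hslope t (Set.Ico_subset_Icc_self ht))
    (Set.right_mem_Icc.2 (zero_le_one (α := ℝ)))
  simpa using this

lemma hasDerivAt_of_hasLineDerivAt {E : Type*} [AddCommGroup E] [Module ℝ E] {f : E → ℝ} {f' : ℝ}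
    {x v : E} {t : ℝ} (hf : HasLineDerivAt ℝ f f' (x + t • v) v) :
    HasDerivAt (fun s : ℝ => f (x + s • v)) f' t := by
  unfold HasLineDerivAt at hf
  rw [← sub_self t] at hf
  simpa [add_assoc, ← add_smul] using hf.comp_sub_const t t

variable {E : Type*} [NormedAddCommGroup E] [InnerProductSpace ℝ E] {f : E → ℝ} {gradf : E → E}
  {hess : E → E → ℝ} {V : Submodule ℝ E} {δ : ℝ} {x m s : E}

lemma abs_sub_sub_inner_le_of_abs_hess_le
    (hgrad : ∀ x v, HasLineDerivAt ℝ f ⟪gradf x, v⟫ x v)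
    (hhess : ∀ x v, HasLineDerivAt ℝ (fun y => ⟪gradf y, v⟫) (hess x v) x v)
    {v : E} {c : ℝ} (hbound : ∀ t : ℝ, |hess (x + t • v) v| ≤ c) :
    |f (x + v) - f x - ⟪gradf x, v⟫| ≤ c / 2 := by
  simpa using abs_sub_sub_le_half_of_abs_deriv_le
    (fun t => hasDerivAt_of_hasLineDerivAt (hgrad (x + t • v) v))
    (fun t => hasDerivAt_of_hasLineDerivAt (hhess (x + t • v) v)) hbound

/- Comparing the Taylor expansions at `x` and at `x + m` of `f` at the two common endpoints
`x + m / 2 ± c • s`, and using the parallelogram law, shows that `c * ⟪gradf (x + m) - gradf x, s⟫`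
is at most a quadratic polynomial in `c`, whose discriminant is then nonpositive. -/
theorem abs_inner_grad_sub_le_of_abs_hess_le
    (hgrad : ∀ x v, HasLineDerivAt ℝ f ⟪gradf x, v⟫ x v)
    (hhess : ∀ x v, HasLineDerivAt ℝ (fun y => ⟪gradf y, v⟫) (hess x v) x v) (hδ : 0 ≤ δ)
    (hbound : ∀ v ∈ V, ∀ w ∈ V, |hess (x + v) w| ≤ δ * ‖w‖ ^ 2) (hm : m ∈ V) (hs : s ∈ V) :
    |⟪gradf (x + m) - gradf x, s⟫| ≤ δ * (‖m‖ * ‖s‖) := by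
  have taylor : ∀ v ∈ V, ∀ w ∈ V,
      |f (x + v + w) - f (x + v) - ⟪gradf (x + v), w⟫| ≤ δ * ‖w‖ ^ 2 / 2 := fun v hv w hw =>
    abs_sub_sub_inner_le_of_abs_hess_le hgrad hhess fun t => by
      rw [add_assoc]
      exact hbound _ (V.add_mem hv (V.smul_mem t hw)) w hw
  have hquad : ∀ c : ℝ, 0 ≤ δ * ‖s‖ ^ 2 * (c * c) + (-⟪gradf (x + m) - gradf x, s⟫) * c +
      δ * ‖m‖ ^ 2 / 4 := by
    intro c
    have hu : (2⁻¹ : ℝ) • m ∈ V := V.smul_mem _ hm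
    have hcs : c • s ∈ V := V.smul_mem _ hs
    generalize hueq : (2⁻¹ : ℝ) • m = u at hu
    obtain rfl : m = u + u := by rw [← hueq]; module
    have h₁ := (abs_le.1 (taylor 0 V.zero_mem _ (V.add_mem hu hcs))).2
    have h₂ := (abs_le.1 (taylor 0 V.zero_mem _ (V.sub_mem hu hcs))).1
    have h₃ := (abs_le.1 (taylor _ hm _ (V.neg_mem (V.sub_mem hu hcs)))).1
    have h₄ := (abs_le.1 (taylor _ hm _ (V.neg_mem (V.add_mem hu hcs)))).2
    rw [show x + (u + u) + -(u - c • s) = x + 0 + (u + c • s) by module] at h₃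
    rw [show x + (u + u) + -(u + c • s) = x + 0 + (u - c • s) by module] at h₄
    have hparallelogram := parallelogram_law_with_norm ℝ u (c • s)
    simp only [norm_neg, inner_neg_right, inner_add_right, inner_sub_right, inner_smul_right,
      add_zero] at h₁ h₂ h₃ h₄
    rw [norm_smul c, Real.norm_eq_abs] at hparallelogram
    have hnorm : ‖u + u‖ = 2 * ‖u‖ := by rw [← two_smul ℝ u, norm_smul, Real.norm_ofNat]
    rw [inner_sub_left, hnorm]
    linear_combination (h₁ + h₂ + h₃ + h₄ + δ * hparallelogram) / 2 + δ * ‖s‖ ^ 2 * sq_abs c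
  have hdiscrim := discrim_le_zero hquad
  rw [discrim] at hdiscrim
  exact abs_le_of_sq_le_sq (by linarith) (by positivity)

theorem abs_inner_grad_sub_sub_le_of_abs_hess_sub_le
    (hgrad : ∀ x v, HasLineDerivAt ℝ f ⟪gradf x, v⟫ x v)
    (hhess : ∀ x v, HasLineDerivAt ℝ (fun y => ⟪gradf y, v⟫) (hess x v) x v) (hδ : 0 ≤ δ)
    (hbound : ∀ v ∈ V, ∀ w ∈ V, |hess (x + v) w - ‖w‖ ^ 2| ≤ δ * ‖w‖ ^ 2)
    (hm : m ∈ V) (hs : s ∈ V) :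
    |⟪gradf (x + m) - gradf x - m, s⟫| ≤ δ * (‖m‖ * ‖s‖) := by
  have hgrad' : ∀ x v, HasLineDerivAt ℝ (fun y => f y - ‖y‖ ^ 2 / 2) ⟪gradf x - x, v⟫ x v := by
    intro x v
    have hnorm := ((hasStrictFDerivAt_norm_sq x).hasFDerivAt.hasLineDerivAt v).div_const 2
    exact ((hgrad x v).sub hnorm).congr_deriv (by simp [inner_sub_left])
  have hhess' : ∀ x v, HasLineDerivAt ℝ (fun y => ⟪gradf y - y, v⟫) (hess x v - ‖v‖ ^ 2) x v := by
    intro x v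
    have hinner : HasLineDerivAt ℝ (fun y => ⟪y, v⟫) (‖v‖ ^ 2) x v := by
      rw [← real_inner_self_eq_norm_sq]
      exact ((innerSL ℝ).flip v).hasFDerivAt.hasLineDerivAt v
    simp only [inner_sub_left]
    exact (hhess x v).sub hinner
  have := abs_inner_grad_sub_le_of_abs_hess_le hgrad' hhess' hδ hbound hm hs
  rwa [show gradf (x + m) - (x + m) - (gradf x - x) = gradf (x + m) - gradf x - m by abel] at this

theorem hess_add_two_mul_inner_grad_le
    (hgrad : ∀ x v, HasLineDerivAt ℝ f ⟪gradf x, v⟫ x v)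
    (hhess : ∀ x v, HasLineDerivAt ℝ (fun y => ⟪gradf y, v⟫) (hess x v) x v) (hδ : 0 ≤ δ)
    (hbound : ∀ v ∈ V, ∀ w ∈ V, |hess (x + v) w - ‖w‖ ^ 2| ≤ δ * ‖w‖ ^ 2)
    (hm : m ∈ V) (hs : s ∈ V) :
    hess (x + m) (m + s) + 2 * ⟪gradf (x + m), s⟫ ≤ ‖m + s‖ ^ 2 + 2 * ⟪m, s⟫ +
      δ * (‖m + s‖ ^ 2 + 2 * (‖m‖ * ‖s‖)) + 2 * ⟪gradf x, s⟫ := by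
  have hcurv := (abs_le.1 (hbound m hm _ (V.add_mem hm hs))).2
  have hgrad_diff :=
    (abs_le.1 (abs_inner_grad_sub_sub_le_of_abs_hess_sub_le hgrad hhess hδ hbound hm hs)).2
  rw [inner_sub_left, inner_sub_left] at hgrad_diff
  linarith

end SecondOrder

section Eigenvalues

variable {n : ℕ} {A : Matrix (Fin n) (Fin n) ℝ}

lemma eigVal_le_eigenvalues (hA : A.IsHermitian) (i : Fin n) : eigVal A n ≤ hA.eigenvalues i := by
  have hn : 0 < n := i.pos
  have hsort := Tuple.monotone_sort hA.eigenvalues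
    (show (⟨n - n, by lia⟩ : Fin n) ≤ (Tuple.sort hA.eigenvalues).symm i by simp [Fin.le_def])
  rw [eigVal, dif_pos hA, dif_pos (by lia)]
  simpa using hsort

lemma eigenvalues_le_eigVal_one (hA : A.IsHermitian) (i : Fin n) :
    hA.eigenvalues i ≤ eigVal A 1 := by
  have hn : 0 < n := i.pos
  have hsort := Tuple.monotone_sort hA.eigenvalues
    (show (Tuple.sort hA.eigenvalues).symm i ≤ (⟨n - 1, by lia⟩ : Fin n) by
      rw [Fin.le_def]; exact Nat.le_sub_one_of_lt (Fin.is_lt _))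
  rw [eigVal, dif_pos hA, dif_pos (by lia)]
  simpa using hsort

lemma posSemidef_sub_eigVal (hA : A.IsHermitian) : (A - eigVal A n • 1).PosSemidef := by
  rw [← Algebra.algebraMap_eq_smul_one, ← Matrix.le_iff, algebraMap_le_iff_le_spectrum,
    hA.spectrum_real_eq_range_eigenvalues, Set.forall_mem_range]
  exact eigVal_le_eigenvalues hA

lemma posSemidef_eigVal_one_sub (hA : A.IsHermitian) : (eigVal A 1 • 1 - A).PosSemidef := by
  rw [← Algebra.algebraMap_eq_smul_one, ← Matrix.le_iff, le_algebraMap_iff_spectrum_le,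
    hA.spectrum_real_eq_range_eigenvalues, Set.forall_mem_range]
  exact eigenvalues_le_eigVal_one hA

end Eigenvalues

section SingularValues

lemma posSemidef_transpose_mul_self {m n : Type*} [Fintype m] [Finite n] (Y : Matrix m n ℝ) :
    (Yᵀ * Y).PosSemidef := by
  have := Fintype.ofFinite n
  simpa using posSemidef_conjTranspose_mul_self Y

lemma posDef_transpose_mul_self_of_rank_eq {m n : Type*} [Fintype m] [Fintype n]
    {Y : Matrix m n ℝ} (hY : Y.rank = Fintype.card n) : (Yᵀ * Y).PosDef := by
  have hinj : Function.Injective Y.mulVec := by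
    rw [mulVec_injective_iff, linearIndependent_iff_card_eq_finrank_span, ← hY,
      rank_eq_finrank_span_cols, Set.finrank]
  simpa using PosDef.conjTranspose_mul_self Y hinj

variable {m n : ℕ}

lemma eigVal_nonneg {A : Matrix (Fin n) (Fin n) ℝ} (hA : A.PosSemidef) (i : ℕ) :
    0 ≤ eigVal A i := by
  unfold eigVal
  split_ifs
  exacts [hA.eigenvalues_nonneg _, le_rfl, le_rfl]

lemma sval_nonneg (Y : Matrix (Fin m) (Fin n) ℝ) (i : ℕ) : 0 ≤ sval Y i := Real.sqrt_nonneg _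

lemma sval_sq (Y : Matrix (Fin m) (Fin n) ℝ) (i : ℕ) : sval Y i ^ 2 = eigVal (Yᵀ * Y) i :=
  Real.sq_sqrt (eigVal_nonneg (posSemidef_transpose_mul_self Y) i)

lemma sval_pos {Y : Matrix (Fin m) (Fin n) ℝ} (hn : 0 < n) (hY : Y.rank = n) : 0 < sval Y n := by
  have hdef : (Yᵀ * Y).PosDef := posDef_transpose_mul_self_of_rank_eq (by simpa using hY)
  rw [sval, Real.sqrt_pos, eigVal, dif_pos hdef.isHermitian, dif_pos (by lia)]
  exact hdef.eigenvalues_pos _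

end SingularValues

section Rank

variable {m n k : Type*} [Fintype n]

lemma rank_le_of_mem_range_mulLeftLinearMap [Fintype k] {W : Matrix m n ℝ} {A : Matrix m k ℝ}
    (hA : A ∈ LinearMap.range (mulLeftLinearMap k ℝ W)) : A.rank ≤ Fintype.card n := by
  obtain ⟨B, rfl⟩ := hA
  exact (rank_mul_le_left W B).trans (rank_le_card_width W)

lemma mul_add_mul_mem_range_mulLeftLinearMap (Y Z : Matrix m n ℝ) (A B : Matrix n k ℝ) :
    Y * A + Z * B ∈ LinearMap.range (mulLeftLinearMap k ℝ (fromCols Y Z)) :=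
  ⟨fromRows A B, fromCols_mul_fromRows Y Z A B⟩

end Rank

section Differences

variable {m n : Type*} {Y Z θ : Matrix m n ℝ}

lemma isSymm_transpose_mul_of_posSemidef [Fintype m] (hY : Y = Z + θ) (hpsd : (Zᵀ * Y).PosSemidef) :
    (Zᵀ * θ).IsSymm := by
  have hsymm : (Zᵀ * Y).IsSymm := hpsd.isHermitian
  rw [hY, Matrix.mul_add] at hsymm
  have hZ : (Zᵀ * Z).IsSymm := isHermitian_conjTranspose_mul_self Z
  simpa using hsymm.sub hZ

lemma mul_transpose_add_mul_transpose_eq [Fintype n] (hY : Y = Z + θ) :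
    Y * θᵀ + θ * Yᵀ = Y * Yᵀ - Z * Zᵀ + θ * θᵀ := by
  rw [hY, transpose_add]
  simp only [Matrix.add_mul, Matrix.mul_add]
  abel

end Differences

section Frobenius

attribute [local instance] Matrix.frobeniusNormedAddCommGroup Matrix.frobeniusNormedSpace

variable {l m n k : Type*} [Fintype l] [Fintype m] [Fintype n] [Fintype k]

/-- The trace inner product `⟪A, B⟫ = tr (Aᵀ B)` on real matrices, whose norm is the Frobenius
norm. -/
noncomputable abbrev frobeniusInnerProductSpace : InnerProductSpace ℝ (Matrix m n ℝ) where
  inner A B := ∑ i, ∑ j, A i j * B i j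
  norm_sq_eq_re_inner A := by
    rw [frobenius_norm_def, ← Real.sqrt_eq_rpow, Real.sq_sqrt (by positivity)]
    simp [← sq]
  conj_inner_symm A B := by simp [mul_comm]
  add_left A B C := by simp [add_mul, Finset.sum_add_distrib]
  smul_left A B c := by simp [Finset.mul_sum, mul_assoc]

attribute [local instance] frobeniusInnerProductSpace

lemma frob_eq_norm {m n : ℕ} (A : Matrix (Fin m) (Fin n) ℝ) : frob A = ‖A‖ := by
  simp [frob, frobenius_norm_def, Real.sqrt_eq_rpow]

lemma trInner_eq_inner {m n : ℕ} (A B : Matrix (Fin m) (Fin n) ℝ) : trInner A B = ⟪A, B⟫ := rfl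

lemma inner_eq_trace (A B : Matrix m n ℝ) : ⟪A, B⟫ = (Aᵀ * B).trace := by
  simp only [inner, trace, diag, mul_apply, transpose_apply]
  exact Finset.sum_comm

lemma inner_transpose_transpose (A B : Matrix m n ℝ) : ⟪Aᵀ, Bᵀ⟫ = ⟪A, B⟫ := by
  simp only [inner, transpose_apply]
  exact Finset.sum_comm

lemma inner_mul_left_eq (A : Matrix m n ℝ) (B : Matrix n k ℝ) (C : Matrix m k ℝ) :
    ⟪A * B, C⟫ = ⟪B, Aᵀ * C⟫ := by
  simp only [inner_eq_trace, transpose_mul, Matrix.mul_assoc]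

lemma inner_mul_right_eq (A : Matrix m n ℝ) (B : Matrix n k ℝ) (C : Matrix m k ℝ) :
    ⟪A * B, C⟫ = ⟪A, C * Bᵀ⟫ := by
  rw [← inner_transpose_transpose, transpose_mul, inner_mul_left_eq, ← inner_transpose_transpose A,
    transpose_mul]

lemma inner_mul_transpose_mul_transpose (A : Matrix m l ℝ) (B : Matrix n l ℝ) (C : Matrix m k ℝ)
    (D : Matrix n k ℝ) : ⟪A * Bᵀ, C * Dᵀ⟫ = ⟪Cᵀ * A, Dᵀ * B⟫ := by
  rw [inner_mul_right_eq, transpose_transpose, real_inner_comm, Matrix.mul_assoc,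
    inner_mul_left_eq, real_inner_comm]

lemma inner_mul_transpose_self_nonneg {P : Matrix n n ℝ} (hP : P.PosSemidef) (B : Matrix n k ℝ) :
    0 ≤ ⟪P, B * Bᵀ⟫ := by
  have hconj := (hP.conjTranspose_mul_mul_same B).trace_nonneg
  rwa [conjTranspose_eq_transpose_of_trivial, Matrix.mul_assoc, ← inner_eq_trace,
    real_inner_comm, inner_mul_right_eq] at hconj

lemma norm_mul_sq_eq_inner (Y : Matrix m n ℝ) (B : Matrix n k ℝ) :
    ‖Y * B‖ ^ 2 = ⟪Yᵀ * Y, B * Bᵀ⟫ := by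
  rw [← real_inner_self_eq_norm_sq, inner_mul_left_eq, ← Matrix.mul_assoc, real_inner_comm,
    inner_mul_right_eq]

lemma inner_one_mul_transpose_self [DecidableEq n] (B : Matrix n k ℝ) :
    ⟪(1 : Matrix n n ℝ), B * Bᵀ⟫ = ‖B‖ ^ 2 := by
  rw [← inner_mul_right_eq, Matrix.one_mul, real_inner_self_eq_norm_sq]

lemma sval_mul_norm_le {m n : ℕ} (Y : Matrix (Fin m) (Fin n) ℝ) (B : Matrix (Fin n) k ℝ) :
    sval Y n * ‖B‖ ≤ ‖Y * B‖ := by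
  have hpsd := inner_mul_transpose_self_nonneg
    (posSemidef_sub_eigVal (posSemidef_transpose_mul_self Y).isHermitian) B
  rw [inner_sub_left, real_inner_smul_left, inner_one_mul_transpose_self, ← norm_mul_sq_eq_inner,
    ← sval_sq, ← mul_pow, sub_nonneg] at hpsd
  exact le_of_sq_le_sq hpsd (norm_nonneg _)

lemma norm_mul_le_sval {m n : ℕ} (Y : Matrix (Fin m) (Fin n) ℝ) (B : Matrix (Fin n) k ℝ) :
    ‖Y * B‖ ≤ sval Y 1 * ‖B‖ := by
  have hpsd := inner_mul_transpose_self_nonneg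
    (posSemidef_eigVal_one_sub (posSemidef_transpose_mul_self Y).isHermitian) B
  rw [inner_sub_left, real_inner_smul_left, inner_one_mul_transpose_self, ← norm_mul_sq_eq_inner,
    ← sval_sq, ← mul_pow, sub_nonneg] at hpsd
  exact le_of_sq_le_sq hpsd (mul_nonneg (sval_nonneg Y 1) (norm_nonneg _))

lemma norm_orthogonal_mul [DecidableEq m] {Q : Matrix m m ℝ} (hQ : Q ∈ orthogonalGroup m ℝ)
    (B : Matrix m n ℝ) : ‖Q * B‖ = ‖B‖ := by
  refine (sq_eq_sq₀ (norm_nonneg _) (norm_nonneg _)).1 ?_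
  rw [norm_mul_sq_eq_inner, (mem_orthogonalGroup_iff' _ _).1 hQ, inner_one_mul_transpose_self]

lemma norm_mul_orthogonal [DecidableEq n] {Q : Matrix n n ℝ} (hQ : Q ∈ orthogonalGroup n ℝ)
    (B : Matrix m n ℝ) : ‖B * Q‖ = ‖B‖ := by
  have hQt : Qᵀ ∈ orthogonalGroup n ℝ := by
    rwa [mem_orthogonalGroup_iff', transpose_transpose, ← mem_orthogonalGroup_iff]
  rw [← frobenius_norm_transpose, transpose_mul, norm_orthogonal_mul hQt, frobenius_norm_transpose]

lemma exp_mem_orthogonalGroup [DecidableEq n] {A : Matrix n n ℝ} (hA : Aᵀ = -A) :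
    NormedSpace.exp A ∈ orthogonalGroup n ℝ := by
  rw [mem_orthogonalGroup_iff', ← Matrix.exp_transpose, hA,
    ← Matrix.exp_add_of_commute _ _ (Commute.refl A).neg_left, neg_add_cancel, NormedSpace.exp_zero]

lemma householder_mem_orthogonalGroup [DecidableEq n] {v : n → ℝ} (hv : v ≠ 0) :
    1 - (2 / (v ⬝ᵥ v)) • vecMulVec v v ∈ orthogonalGroup n ℝ := by
  have hvv : v ⬝ᵥ v ≠ 0 := mt dotProduct_self_eq_zero.1 hv
  have hsq : vecMulVec v v * vecMulVec v v = (v ⬝ᵥ v) • vecMulVec v v := by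
    rw [vecMulVec_mul_vecMulVec, vecMulVec_smul]
  have hcoeff : 2 / (v ⬝ᵥ v) * (2 / (v ⬝ᵥ v)) * (v ⬝ᵥ v) = 2 * (2 / (v ⬝ᵥ v)) := by field_simp
  rw [mem_orthogonalGroup_iff', transpose_sub, transpose_smul, transpose_one, transpose_vecMulVec,
    sub_mul, mul_sub, mul_sub, mul_one, one_mul, mul_one, smul_mul_smul_comm, hsq, smul_smul,
    hcoeff]
  module

theorem isSymm_of_forall_orthogonal_inner_le [DecidableEq n] {V : Matrix n n ℝ}
    (hV : ∀ O ∈ orthogonalGroup n ℝ, ⟪O, V⟫ ≤ ⟪1, V⟫) : V.IsSymm := by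
  let := Matrix.frobeniusNormedRing (m := n) (α := ℝ)
  let := Matrix.frobeniusNormedAlgebra (m := n) (R := ℝ) (α := ℝ)
  have hderiv : HasDerivAt (fun t : ℝ => ⟪NormedSpace.exp (t • (V - Vᵀ)), V⟫) ⟪V - Vᵀ, V⟫ 0 := by
    have hexp := (hasDerivAt_exp_smul_const (𝕂 := ℝ) (V - Vᵀ) (0 : ℝ)).inner ℝ
      (hasDerivAt_const (0 : ℝ) V)
    refine hexp.congr_deriv ?_
    simp
  have hmax : IsLocalMax (fun t : ℝ => ⟪NormedSpace.exp (t • (V - Vᵀ)), V⟫) 0 := by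
    refine Filter.Eventually.of_forall fun t => ?_
    simpa using hV _ (exp_mem_orthogonalGroup (by simp [transpose_smul, ← smul_neg]))
  have hzero : ⟪V - Vᵀ, V⟫ = 0 := hmax.hasDerivAt_eq_zero hderiv
  have hzero' : ⟪V - Vᵀ, Vᵀ⟫ = 0 := by
    rw [← inner_transpose_transpose, ← neg_eq_zero, ← inner_neg_left]
    simpa using hzero
  have : ⟪V - Vᵀ, V - Vᵀ⟫ = 0 := by rw [inner_sub_right, hzero, hzero', sub_zero]
  exact (sub_eq_zero.1 (inner_self_eq_zero.1 this)).symm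

theorem posSemidef_of_forall_orthogonal_inner_le [DecidableEq n] {V : Matrix n n ℝ}
    (hV : ∀ O ∈ orthogonalGroup n ℝ, ⟪O, V⟫ ≤ ⟪1, V⟫) : V.PosSemidef := by
  refine .of_dotProduct_mulVec_nonneg ?_ fun v => ?_
  · exact isSymm_of_forall_orthogonal_inner_le hV
  · obtain rfl | hv := eq_or_ne v 0
    · simp
    have hpos : 0 < 2 / (v ⬝ᵥ v) := div_pos two_pos (dotProduct_self_star_pos_iff.2 hv)
    have hquad : ⟪vecMulVec v v, V⟫ = v ⬝ᵥ (V *ᵥ v) := by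
      rw [inner_eq_trace, transpose_vecMulVec, vecMulVec_mul, trace_vecMulVec, dotProduct_mulVec,
        dotProduct_comm]
    have hle := hV _ (householder_mem_orthogonalGroup hv)
    rw [inner_sub_left, real_inner_smul_left, hquad] at hle
    rw [star_trivial]
    exact nonneg_of_mul_nonneg_right (by linarith) hpos

section AlignedFactors

variable {Y Z θ : Matrix m n ℝ}

lemma norm_mul_transpose_sub_sq (hY : Y = Z + θ) (hsymm : (Zᵀ * θ).IsSymm) :
    ‖Y * Yᵀ - Z * Zᵀ‖ ^ 2 = ‖θ * θᵀ‖ ^ 2 + 4 * ⟪Zᵀ * θ, θᵀ * θ⟫ + 2 * ‖Zᵀ * θ‖ ^ 2 +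
      2 * ‖Z * θᵀ‖ ^ 2 := by
  have hsymm' : θᵀ * Z = Zᵀ * θ := by simpa using hsymm.eq
  have hexpand : Y * Yᵀ - Z * Zᵀ = Z * θᵀ + θ * Zᵀ + θ * θᵀ := by
    rw [hY, transpose_add, Matrix.add_mul, Matrix.mul_add, Matrix.mul_add]
    abel
  simp only [hexpand, ← real_inner_self_eq_norm_sq, inner_add_left, inner_add_right,
    inner_mul_transpose_mul_transpose, hsymm']
  rw [real_inner_comm (Zᵀ * Z), real_inner_comm (Zᵀ * θ) (θᵀ * θ)]
  ring

lemma norm_transpose_mul_self_add_smul_sq (c : ℝ) (Z θ : Matrix m n ℝ) :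
    ‖θᵀ * θ + c • (Zᵀ * θ)‖ ^ 2 =
      ‖θ * θᵀ‖ ^ 2 + 2 * c * ⟪Zᵀ * θ, θᵀ * θ⟫ + c ^ 2 * ‖Zᵀ * θ‖ ^ 2 := by
  rw [norm_add_sq_real, norm_smul, mul_pow, Real.norm_eq_abs, sq_abs, real_inner_smul_right,
    real_inner_comm, ← real_inner_self_eq_norm_sq (θᵀ * θ), ← real_inner_self_eq_norm_sq (θ * θᵀ),
    inner_mul_transpose_mul_transpose]
  ring

lemma norm_sq_add_inner_nonneg (hY : Y = Z + θ) (hpsd : (Zᵀ * Y).PosSemidef) :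
    0 ≤ ‖Z * θᵀ‖ ^ 2 + ⟪Zᵀ * θ, θᵀ * θ⟫ := by
  rw [norm_mul_sq_eq_inner, transpose_transpose, ← inner_add_left, ← Matrix.mul_add, ← hY]
  simpa using inner_mul_transpose_self_nonneg hpsd θᵀ

theorem norm_mul_transpose_self_sq_le (hY : Y = Z + θ) (hpsd : (Zᵀ * Y).PosSemidef) :
    ‖θ * θᵀ‖ ^ 2 ≤ 2 * ‖Y * Yᵀ - Z * Zᵀ‖ ^ 2 := by
  have hsq := sq_nonneg ‖θᵀ * θ + (2 : ℝ) • (Zᵀ * θ)‖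
  rw [norm_transpose_mul_self_add_smul_sq] at hsq
  rw [norm_mul_transpose_sub_sq hY (isSymm_transpose_mul_of_posSemidef hY hpsd)]
  linear_combination hsq + 4 * norm_sq_add_inner_nonneg hY hpsd

theorem norm_mul_transpose_sq_le (hY : Y = Z + θ) (hpsd : (Zᵀ * Y).PosSemidef) :
    2 * (√2 - 1) * ‖Z * θᵀ‖ ^ 2 ≤ ‖Y * Yᵀ - Z * Zᵀ‖ ^ 2 := by
  have hsq := sq_nonneg ‖θᵀ * θ + √2 • (Zᵀ * θ)‖
  rw [norm_transpose_mul_self_add_smul_sq, Real.sq_sqrt zero_le_two] at hsq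
  have hsqrt : 0 ≤ 2 - √2 := sub_nonneg.2 (Real.sqrt_le_left (by simp) |>.2 (by norm_num))
  rw [norm_mul_transpose_sub_sq hY (isSymm_transpose_mul_of_posSemidef hY hpsd)]
  linear_combination hsq + 2 * mul_nonneg hsqrt (norm_sq_add_inner_nonneg hY hpsd)

lemma inner_mul_transpose_add_mul_transpose {M : Matrix m m ℝ} (hM : M.IsSymm)
    (Y θ : Matrix m n ℝ) : ⟪M, Y * θᵀ + θ * Yᵀ⟫ = ⟪(2 : ℝ) • (M * Y), θ⟫ := by
  rw [inner_add_right, ← inner_transpose_transpose M (Y * θᵀ), hM.eq, transpose_mul,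
    transpose_transpose, real_inner_smul_left, inner_mul_right_eq, two_mul]

theorem norm_sq_add_two_mul_inner_le (hY : Y = Z + θ) (hpsd : (Zᵀ * Y).PosSemidef) :
    ‖Y * θᵀ + θ * Yᵀ‖ ^ 2 + 2 * ⟪Y * Yᵀ - Z * Zᵀ, θ * θᵀ⟫ ≤
      4 * ⟪(2 : ℝ) • ((Y * Yᵀ - Z * Zᵀ) * Y), θ⟫ - 2 * (√2 - 1) * ‖Z * θᵀ‖ ^ 2 := by
  have hsymm : (Y * Yᵀ - Z * Zᵀ).IsSymm := by
    simp only [IsSymm, transpose_sub, transpose_mul, transpose_transpose]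
  have hθθ := norm_mul_transpose_self_sq_le hY hpsd
  have hZθ := norm_mul_transpose_sq_le hY hpsd
  rw [← inner_mul_transpose_add_mul_transpose hsymm, mul_transpose_add_mul_transpose_eq hY,
    norm_add_sq_real, inner_add_right, real_inner_self_eq_norm_sq]
  linarith

end AlignedFactors

section RestrictedDualNorm

/-- The norm dual to the Frobenius norm restricted to matrices of rank at most `r`; at the gradient
of an objective it measures the noise level visible to a rank-`r` estimator. -/
noncomputable def restrictedDualNorm (r : ℕ) (A : Matrix m n ℝ) : ℝ :=
  sSup {c | ∃ B : Matrix m n ℝ, B.rank ≤ r ∧ ‖B‖ ≤ 1 ∧ c = ⟪B, A⟫}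

lemma inner_le_restrictedDualNorm {r : ℕ} (A : Matrix m n ℝ) {B : Matrix m n ℝ}
    (hrank : B.rank ≤ r) (hB : ‖B‖ ≤ 1) : ⟪B, A⟫ ≤ restrictedDualNorm r A := by
  refine le_csSup ⟨‖A‖, ?_⟩ ⟨B, hrank, hB, rfl⟩
  rintro c ⟨C, -, hC, rfl⟩
  exact (real_inner_le_norm C A).trans (mul_le_of_le_one_left (norm_nonneg A) hC)

lemma restrictedDualNorm_nonneg (r : ℕ) (A : Matrix m n ℝ) : 0 ≤ restrictedDualNorm r A := by
  simpa using inner_le_restrictedDualNorm (r := r) A (B := 0) (by simp) (by simp)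

lemma inner_le_restrictedDualNorm_mul_norm {r : ℕ} (A : Matrix m n ℝ) {B : Matrix m n ℝ}
    (hrank : B.rank ≤ r) : ⟪A, B⟫ ≤ restrictedDualNorm r A * ‖B‖ := by
  obtain rfl | hB := eq_or_ne B 0
  · simp
  have hpos : 0 < ‖B‖ := norm_pos_iff.2 hB
  have hscaled : (‖B‖⁻¹ • B).rank ≤ r := by
    rwa [rank_smul_of_mem_nonZeroDivisors _ (mem_nonZeroDivisors_of_ne_zero (by positivity))]
  have := inner_le_restrictedDualNorm A hscaled (norm_smul_inv_norm hB).le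
  rwa [real_inner_smul_left, inv_mul_le_iff₀ hpos, mul_comm, real_inner_comm] at this

end RestrictedDualNorm

/-- The `(k, l)`-restricted strong convexity and smoothness property with parameter `δ`, for a
function on matrices given through the quadratic form `hess X` of its Hessian at each point `X`. -/
def IsRestrictedConvexSmooth (k l : ℕ) (δ : ℝ) (hess : Matrix m n ℝ → Matrix m n ℝ → ℝ) : Prop :=
  ∀ X G, X.rank ≤ k → G.rank ≤ l →
    (1 - δ) * ‖G‖ ^ 2 ≤ hess X G ∧ hess X G ≤ (1 + δ) * ‖G‖ ^ 2

section Curvature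

variable {f : Matrix m m ℝ → ℝ} {gradf : Matrix m m ℝ → Matrix m m ℝ}
  {hess : Matrix m m ℝ → Matrix m m ℝ → ℝ} {δ : ℝ} {Y Z θ : Matrix m n ℝ}

lemma IsRestrictedConvexSmooth.abs_hess_sub_norm_sq_le {k l : ℕ}
    (h : IsRestrictedConvexSmooth k l δ hess) {X G : Matrix m m ℝ}
    (hX : X.rank ≤ k) (hG : G.rank ≤ l) : |hess X G - ‖G‖ ^ 2| ≤ δ * ‖G‖ ^ 2 := by
  obtain ⟨hlower, hupper⟩ := h X G hX hG
  exact abs_le.2 ⟨by linarith, by linarith⟩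

lemma norm_mul_transpose_add_mul_transpose_sq_le (Y θ : Matrix m n ℝ) :
    ‖Y * θᵀ + θ * Yᵀ‖ ^ 2 ≤ 4 * ‖Y * θᵀ‖ ^ 2 := by
  have htri := norm_add_le (Y * θᵀ) (θ * Yᵀ)
  rw [← frobenius_norm_transpose (θ * Yᵀ), transpose_mul, transpose_transpose] at htri
  calc ‖Y * θᵀ + θ * Yᵀ‖ ^ 2 ≤ (‖Y * θᵀ‖ + ‖Y * θᵀ‖) ^ 2 := by gcongr
    _ = 4 * ‖Y * θᵀ‖ ^ 2 := by ring

lemma norm_mul_transpose_self_le (θ : Matrix m n ℝ) : ‖θ * θᵀ‖ ≤ ‖θ‖ ^ 2 :=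
  (frobenius_norm_mul θ θᵀ).trans_eq (by rw [frobenius_norm_transpose, sq])

/- All the matrices in play lie in the space of matrices whose columns are spanned by those of `Y`
and `Z`, so their ranks are at most `2r`. -/
theorem hess_add_two_mul_inner_grad_le_of_isRestrictedConvexSmooth
    (hgrad : ∀ X G, HasLineDerivAt ℝ f ⟪gradf X, G⟫ X G)
    (hhess : ∀ X G, HasLineDerivAt ℝ (fun X => ⟪gradf X, G⟫) (hess X G) X G) (hδ : 0 ≤ δ)
    (hRSC : IsRestrictedConvexSmooth (2 * Fintype.card n) (2 * Fintype.card n) δ hess)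
    (hY : Y = Z + θ) :
    hess (Y * Yᵀ) (Y * θᵀ + θ * Yᵀ) + 2 * ⟪gradf (Y * Yᵀ), θ * θᵀ⟫ ≤
      ‖Y * θᵀ + θ * Yᵀ‖ ^ 2 + 2 * ⟪Y * Yᵀ - Z * Zᵀ, θ * θᵀ⟫ +
        δ * (‖Y * θᵀ + θ * Yᵀ‖ ^ 2 + 2 * (‖Y * Yᵀ - Z * Zᵀ‖ * ‖θ * θᵀ‖)) +
        2 * ⟪gradf (Z * Zᵀ), θ * θᵀ⟫ := by
  let V := LinearMap.range (mulLeftLinearMap m ℝ (fromCols Y Z))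
  have hrank : ∀ A ∈ V, A.rank ≤ 2 * Fintype.card n := fun A hA =>
    (rank_le_of_mem_range_mulLeftLinearMap hA).trans_eq (by rw [Fintype.card_sum, two_mul])
  have hV : ∀ A B : Matrix n m ℝ, Y * A + Z * B ∈ V :=
    mul_add_mul_mem_range_mulLeftLinearMap Y Z
  have hbase : Z * Zᵀ ∈ V := by simpa using hV 0 Zᵀ
  have hdiff : Y * Yᵀ - Z * Zᵀ ∈ V := by simpa [sub_eq_add_neg] using hV Yᵀ (-Zᵀ)
  have hθ : θ * θᵀ ∈ V := by
    have hθ_eq : Y * θᵀ + Z * -θᵀ = θ * θᵀ := by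
      rw [hY, Matrix.add_mul, Matrix.mul_neg, add_neg_cancel_comm]
    exact hθ_eq ▸ hV θᵀ (-θᵀ)
  have := hess_add_two_mul_inner_grad_le (x := Z * Zᵀ) hgrad hhess hδ (fun v hv w hw =>
    hRSC.abs_hess_sub_norm_sq_le (hrank _ (V.add_mem hbase hv)) (hrank w hw)) hdiff hθ
  rwa [add_sub_cancel, ← mul_transpose_add_mul_transpose_eq hY] at this

theorem hess_add_two_mul_inner_grad_le_of_posSemidef
    (hgrad : ∀ X G, HasLineDerivAt ℝ f ⟪gradf X, G⟫ X G)
    (hhess : ∀ X G, HasLineDerivAt ℝ (fun X => ⟪gradf X, G⟫) (hess X G) X G) (hδ : 0 ≤ δ)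
    (hRSC : IsRestrictedConvexSmooth (2 * Fintype.card n) (2 * Fintype.card n) δ hess)
    (hY : Y = Z + θ) (hpsd : (Zᵀ * Y).PosSemidef) :
    hess (Y * Yᵀ) (Y * θᵀ + θ * Yᵀ) + 2 * ⟪gradf (Y * Yᵀ), θ * θᵀ⟫ ≤
      4 * ⟪(2 : ℝ) • ((Y * Yᵀ - Z * Zᵀ) * Y), θ⟫ - 2 * (√2 - 1) * ‖Z * θᵀ‖ ^ 2 +
        2 * δ * (2 * ‖Y * θᵀ‖ ^ 2 + ‖Y * Yᵀ - Z * Zᵀ‖ * ‖θ‖ ^ 2) +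
        2 * restrictedDualNorm (Fintype.card n) (gradf (Z * Zᵀ)) * ‖θ‖ ^ 2 := by
  have hcurv :=
    hess_add_two_mul_inner_grad_le_of_isRestrictedConvexSmooth hgrad hhess hδ hRSC hY
  have hmodel := norm_sq_add_two_mul_inner_le hY hpsd
  have hcross := norm_mul_transpose_add_mul_transpose_sq_le Y θ
  have hθθ := norm_mul_transpose_self_le θ
  have hnoise : ⟪gradf (Z * Zᵀ), θ * θᵀ⟫ ≤
      restrictedDualNorm (Fintype.card n) (gradf (Z * Zᵀ)) * ‖θ * θᵀ‖ :=
    inner_le_restrictedDualNorm_mul_norm _ ((rank_mul_le_left θ θᵀ).trans (rank_le_card_width θ))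
  have hnoise_nonneg := restrictedDualNorm_nonneg (Fintype.card n) (gradf (Z * Zᵀ))
  linear_combination hcurv + hmodel + δ * hcross + 2 * hnoise +
    2 * δ * ‖Y * Yᵀ - Z * Zᵀ‖ * hθθ +
    2 * restrictedDualNorm (Fintype.card n) (gradf (Z * Zᵀ)) * hθθ

theorem hess_add_two_mul_inner_grad_le_mul_norm_sq {α γ b σ : ℝ}
    (hgrad : ∀ X G, HasLineDerivAt ℝ f ⟪gradf X, G⟫ X G)
    (hhess : ∀ X G, HasLineDerivAt ℝ (fun X => ⟪gradf X, G⟫) (hess X G) X G) (hδ : 0 ≤ δ)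
    (hRSC : IsRestrictedConvexSmooth (2 * Fintype.card n) (2 * Fintype.card n) δ hess)
    (hY : Y = Z + θ) (hpsd : (Zᵀ * Y).PosSemidef) (hσ : 0 ≤ σ) (hZθ : σ * ‖θ‖ ≤ ‖Z * θᵀ‖)
    (hYθ : ‖Y * θᵀ‖ ≤ b * ‖θ‖) (hYY : ‖Y * Yᵀ‖ ≤ γ * ‖Z * Zᵀ‖)
    (hstat : 4 * ⟪(2 : ℝ) • ((Y * Yᵀ - Z * Zᵀ) * Y), θ⟫ ≤ α * σ ^ 2 * ‖θ‖ ^ 2) :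
    hess (Y * Yᵀ) (Y * θᵀ + θ * Yᵀ) + 2 * ⟪gradf (Y * Yᵀ), θ * θᵀ⟫ ≤
      ((α - 2 * (√2 - 1)) * σ ^ 2 + 2 * δ * (2 * b ^ 2 + (1 + γ) * ‖Z * Zᵀ‖) +
        2 * restrictedDualNorm (Fintype.card n) (gradf (Z * Zᵀ))) * ‖θ‖ ^ 2 := by
  have hcurv := hess_add_two_mul_inner_grad_le_of_posSemidef hgrad hhess hδ hRSC hY hpsd
  have hZθ_sq : (σ * ‖θ‖) ^ 2 ≤ ‖Z * θᵀ‖ ^ 2 := by gcongr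
  have hYθ_sq : ‖Y * θᵀ‖ ^ 2 ≤ (b * ‖θ‖) ^ 2 := by gcongr
  have hdiff : ‖Y * Yᵀ - Z * Zᵀ‖ ≤ (1 + γ) * ‖Z * Zᵀ‖ := by
    linarith [norm_sub_le (Y * Yᵀ) (Z * Zᵀ)]
  have hsqrt : 0 ≤ √2 - 1 := sub_nonneg.2 (Real.one_le_sqrt.2 one_le_two)
  linear_combination hcurv + hstat + 2 * (√2 - 1) * hZθ_sq + 4 * δ * hYθ_sq +
    2 * δ * ‖θ‖ ^ 2 * hdiff

end Curvature

section Alignment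

theorem posSemidef_transpose_mul_of_forall_norm_sub_le [DecidableEq n] {Y Z : Matrix m n ℝ}
    (hmin : ∀ O ∈ orthogonalGroup n ℝ, ‖Y - Z‖ ≤ ‖Y - Z * O‖) : (Zᵀ * Y).PosSemidef := by
  refine posSemidef_of_forall_orthogonal_inner_le fun O hO => ?_
  have hsq : ‖Y - Z‖ ^ 2 ≤ ‖Y - Z * O‖ ^ 2 := by gcongr; exact hmin O hO
  rw [norm_sub_sq_real, norm_sub_sq_real, norm_mul_orthogonal hO] at hsq
  rw [← inner_mul_left_eq, ← inner_mul_left_eq, Matrix.mul_one, real_inner_comm,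
    real_inner_comm Y Z]
  linarith

variable {p r : ℕ} {Y Ystar : Matrix (Fin p) (Fin r) ℝ} {Q : Matrix (Fin r) (Fin r) ℝ}

lemma isOrtho_iff_mem_orthogonalGroup : IsOrtho Q ↔ Q ∈ orthogonalGroup (Fin r) ℝ :=
  (mem_orthogonalGroup_iff' _ _).symm

lemma posSemidef_of_isOrtho_of_forall_frob_le (hQ : IsOrtho Q)
    (hQmin : ∀ O, IsOrtho O → frob (Y - Ystar * Q) ≤ frob (Y - Ystar * O)) :
    ((Ystar * Q)ᵀ * Y).PosSemidef := by
  simp only [isOrtho_iff_mem_orthogonalGroup, frob_eq_norm] at hQ hQmin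
  refine posSemidef_transpose_mul_of_forall_norm_sub_le fun O hO => ?_
  rw [Matrix.mul_assoc]
  exact hQmin (Q * O) (mul_mem hQ hO)

lemma mul_orthogonal_mul_transpose (hQ : IsOrtho Q) (Ystar : Matrix (Fin p) (Fin r) ℝ) :
    Ystar * Q * (Ystar * Q)ᵀ = Ystar * Ystarᵀ := by
  have hQQ : Q * Qᵀ = 1 := mul_eq_one_comm.1 hQ
  rw [transpose_mul, Matrix.mul_assoc, ← Matrix.mul_assoc Q, hQQ, Matrix.one_mul]

lemma dOrth_le_norm_sub (hQ : IsOrtho Q) (Y Ystar : Matrix (Fin p) (Fin r) ℝ) :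
    dOrth Y Ystar ≤ ‖Y - Ystar * Q‖ := by
  refine csInf_le ⟨0, ?_⟩ ⟨Q, hQ, by rw [frob_eq_norm, norm_sub_rev]⟩
  rintro c ⟨O, -, rfl⟩
  exact Real.sqrt_nonneg _

lemma sval_mul_norm_le_norm_mul_orthogonal_mul_transpose (hQ : IsOrtho Q)
    (Ystar θ : Matrix (Fin p) (Fin r) ℝ) : sval Ystar r * ‖θ‖ ≤ ‖Ystar * Q * θᵀ‖ := by
  have := sval_mul_norm_le Ystar (Q * θᵀ)
  rwa [norm_orthogonal_mul (isOrtho_iff_mem_orthogonalGroup.1 hQ), frobenius_norm_transpose,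
    ← Matrix.mul_assoc] at this

end Alignment

lemma four_mul_inner_le_of_norm_le {A θ : Matrix m n ℝ} {α μ σ κ : ℝ} (hα : 0 ≤ α)
    (hA : ‖A‖ ≤ α * μ * σ ^ 3 / (4 * κ)) (hθ : μ * σ / κ ≤ ‖θ‖) :
    4 * ⟪A, θ⟫ ≤ α * σ ^ 2 * ‖θ‖ ^ 2 := by
  have hA' : 4 * ‖A‖ ≤ α * σ ^ 2 * ‖θ‖ := calc
    4 * ‖A‖ ≤ 4 * (α * μ * σ ^ 3 / (4 * κ)) := by gcongr
    _ = α * σ ^ 2 * (μ * σ / κ) := by ring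
    _ ≤ α * σ ^ 2 * ‖θ‖ := by gcongr
  calc 4 * ⟪A, θ⟫ ≤ 4 * ‖A‖ * ‖θ‖ := by
        rw [mul_assoc]; gcongr; exact real_inner_le_norm A θ
    _ ≤ α * σ ^ 2 * ‖θ‖ * ‖θ‖ := by gcongr
    _ = α * σ ^ 2 * ‖θ‖ ^ 2 := by ring

lemma le_half_mul_and_neg_of_le {q α c δ D N s t : ℝ}
    (hq : q ≤ ((α - c) * s ^ 2 + 2 * δ * D + 2 * N) * t ^ 2) (hs : 0 < s) (ht : 0 < t)
    (hD : 0 ≤ D) (hα : α < c) (hδ : δ ≤ (c - α) * s ^ 2 / (8 * D))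
    (hN : N ≤ (c - α) * s ^ 2 / 8) :
    q ≤ (α - c) / 2 * s ^ 2 * t ^ 2 ∧ q < 0 := by
  have hgap : 0 < c - α := sub_pos.2 hα
  have hδD : δ * (8 * D) ≤ (c - α) * s ^ 2 :=
    mul_le_of_le_div₀ (mul_nonneg hgap.le (sq_nonneg s)) (by positivity) hδ
  have hle : q ≤ (α - c) / 2 * s ^ 2 * t ^ 2 := by
    linear_combination hq + t ^ 2 / 4 * hδD + 2 * t ^ 2 * hN
  have hpos : 0 < (c - α) / 2 * s ^ 2 * t ^ 2 := by positivity
  exact ⟨hle, by linarith⟩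

theorem stmt14_general {p r : ℕ}
    (f : Matrix (Fin p) (Fin p) ℝ → ℝ)
    (gradf : Matrix (Fin p) (Fin p) ℝ → Matrix (Fin p) (Fin p) ℝ)
    (hessf : Matrix (Fin p) (Fin p) ℝ → Matrix (Fin p) (Fin p) ℝ → ℝ)
    (hgradf : ∀ X D : Matrix (Fin p) (Fin p) ℝ,
      HasDerivAt (fun t : ℝ => f (X + t • D)) (trInner (gradf X) D) 0)
    (hhessf : ∀ X G : Matrix (Fin p) (Fin p) ℝ,
      HasDerivAt (fun t : ℝ => trInner (gradf (X + t • G)) G) (hessf X G) 0)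
    (δ : ℝ) (hδ0 : 0 ≤ δ)
    (hRSCS : ∀ X G : Matrix (Fin p) (Fin p) ℝ, X.rank ≤ 2 * r → G.rank ≤ 2 * r →
      (1 - δ) * (frob G) ^ 2 ≤ hessf X G ∧ hessf X G ≤ (1 + δ) * (frob G) ^ 2)
    (Ystar : Matrix (Fin p) (Fin r) ℝ) (hYs : Ystar.rank = r)
    (X : Matrix (Fin p) (Fin p) ℝ) (hX : X = Ystar * Ystarᵀ)
    (N : ℝ) (hN : N = sSup {c : ℝ | ∃ B : Matrix (Fin p) (Fin p) ℝ,
      B.rank ≤ r ∧ frob B ≤ 1 ∧ c = trInner B (gradf X)})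
    (κ : ℝ) (hκ : κ = sval Ystar 1 / sval Ystar r)
    (μ α β γ : ℝ) (hμ0 : 0 ≤ μ) (hα0 : 0 ≤ α)
    (Y : Matrix (Fin p) (Fin r) ℝ)
    (hd : dOrth Y Ystar > μ * sval Ystar r / κ)
    (hgradH : frob ((2 : ℝ) • ((Y * Yᵀ - X) * Y)) ≤ α * μ * (sval Ystar r) ^ 3 / (4 * κ))
    (hspec : sval Y 1 ≤ β * sval Ystar 1)
    (hfrobYY : frob (Y * Yᵀ) ≤ γ * frob X)
    (Q : Matrix (Fin r) (Fin r) ℝ) (hQ : IsOrtho Q)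
    (hQmin : ∀ O : Matrix (Fin r) (Fin r) ℝ, IsOrtho O →
      frob (Y - Ystar * Q) ≤ frob (Y - Ystar * O))
    (θ : Matrix (Fin p) (Fin r) ℝ) (hθ : θ = Y - Ystar * Q) :
    hessf (Y * Yᵀ) (Y * θᵀ + θ * Yᵀ) + 2 * trInner (gradf (Y * Yᵀ)) (θ * θᵀ) ≤
      ((α - 2 * (Real.sqrt 2 - 1)) * (sval Ystar r) ^ 2 +
        2 * δ * (2 * β ^ 2 * (sval Ystar 1) ^ 2 + (1 + γ) * frob X) + 2 * N) *
        (frob θ) ^ 2 ∧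
    (α < 2 * (Real.sqrt 2 - 1) →
      δ ≤ (2 * (Real.sqrt 2 - 1) - α) * (sval Ystar r) ^ 2 /
        (8 * (2 * β ^ 2 * (sval Ystar 1) ^ 2 + (1 + γ) * frob X)) →
      N ≤ (2 * (Real.sqrt 2 - 1) - α) * (sval Ystar r) ^ 2 / 8 →
      hessf (Y * Yᵀ) (Y * θᵀ + θ * Yᵀ) + 2 * trInner (gradf (Y * Yᵀ)) (θ * θᵀ) ≤
        ((α - 2 * (Real.sqrt 2 - 1)) / 2) * (sval Ystar r) ^ 2 * (frob θ) ^ 2 ∧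
      hessf (Y * Yᵀ) (Y * θᵀ + θ * Yᵀ) + 2 * trInner (gradf (Y * Yᵀ)) (θ * θᵀ) < 0) := by
  subst hX
  have hYθ : Y = Ystar * Q + θ := by rw [hθ, add_sub_cancel]
  have hXQ := mul_orthogonal_mul_transpose hQ Ystar
  have hσ := sval_nonneg Ystar
  have hθ_far : μ * sval Ystar r / κ < ‖θ‖ := hd.trans_le (hθ ▸ dOrth_le_norm_sub hQ Y Ystar)
  have hRSC : IsRestrictedConvexSmooth (2 * r) (2 * r) δ hessf := fun A G hA hG =>
    frob_eq_norm G ▸ hRSCS A G hA hG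
  simp only [frob_eq_norm, trInner_eq_inner] at hgradf hhessf hgradH hfrobYY hN ⊢
  have hN' : N = restrictedDualNorm r (gradf (Ystar * Ystarᵀ)) := hN
  have hnorm : ‖Y * θᵀ‖ ≤ β * sval Ystar 1 * ‖θ‖ :=
    (norm_mul_le_sval Y θᵀ).trans (by rw [frobenius_norm_transpose]; gcongr)
  have hbound := hess_add_two_mul_inner_grad_le_mul_norm_sq (α := α) hgradf hhessf hδ0
    (by simpa using hRSC) hYθ (posSemidef_of_isOrtho_of_forall_frob_le hQ hQmin) (hσ r)
    (sval_mul_norm_le_norm_mul_orthogonal_mul_transpose hQ Ystar θ) hnorm (by rwa [hXQ])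
    (by rw [hXQ]; exact four_mul_inner_le_of_norm_le hα0 hgradH hθ_far.le)
  rw [hXQ, Fintype.card_fin, ← hN', mul_pow, ← mul_assoc 2] at hbound
  refine ⟨hbound, fun hα hδ hN_le => ?_⟩
  have hθ_pos : 0 < ‖θ‖ := hθ_far.trans_le' (by rw [hκ]; have := hσ 1; have := hσ r; positivity)
  have hr : 0 < r := Nat.pos_of_ne_zero (by rintro rfl; simp [Subsingleton.elim θ 0] at hθ_pos)
  refine le_half_mul_and_neg_of_le hbound (sval_pos hr hYs) hθ_pos
    (add_nonneg (by positivity) ?_) hα hδ hN_le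
  linarith [norm_nonneg (Y * Yᵀ), norm_nonneg (Ystar * Ystarᵀ)]

end Frobenius

/-- region with negative curvature for `h`: upper bound on the lifted
Riemannian Hessian quadratic form of `h([Y]) = f(YYᵀ)` along the escaping direction
`θ = Y - Ystar Q`, and strict negativity under the stated conditions on `α`, `δ` and `N`. -/
theorem stmt14 {p r : ℕ}
    (f : Matrix (Fin p) (Fin p) ℝ → ℝ)
    (gradf : Matrix (Fin p) (Fin p) ℝ → Matrix (Fin p) (Fin p) ℝ)
    (hessf : Matrix (Fin p) (Fin p) ℝ → Matrix (Fin p) (Fin p) ℝ → ℝ)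
    (hgradf : ∀ X D : Matrix (Fin p) (Fin p) ℝ,
      HasDerivAt (fun t : ℝ => f (X + t • D)) (trInner (gradf X) D) 0)
    (hhessf : ∀ X G : Matrix (Fin p) (Fin p) ℝ,
      HasDerivAt (fun t : ℝ => trInner (gradf (X + t • G)) G) (hessf X G) 0)
    (δ : ℝ) (hδ0 : 0 ≤ δ) (hδ1 : δ < 1)
    (hRSCS : ∀ X G : Matrix (Fin p) (Fin p) ℝ, X.rank ≤ 2 * r → G.rank ≤ 4 * r →
      (1 - δ) * (frob G) ^ 2 ≤ hessf X G ∧ hessf X G ≤ (1 + δ) * (frob G) ^ 2)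
    (Ystar : Matrix (Fin p) (Fin r) ℝ) (hYs : Ystar.rank = r)
    (X : Matrix (Fin p) (Fin p) ℝ) (hX : X = Ystar * Ystarᵀ)
    (N : ℝ) (hN : N = sSup {c : ℝ | ∃ B : Matrix (Fin p) (Fin p) ℝ,
      B.rank ≤ r ∧ frob B ≤ 1 ∧ c = trInner B (gradf X)})
    (κ : ℝ) (hκ : κ = sval Ystar 1 / sval Ystar r)
    (μ α β γ : ℝ) (hμ0 : 0 ≤ μ) (hα0 : 0 ≤ α) (hβ0 : 0 ≤ β) (hγ0 : 0 ≤ γ)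
    (Y : Matrix (Fin p) (Fin r) ℝ) (hY : Y.rank = r)
    (hd : dOrth Y Ystar > μ * sval Ystar r / κ)
    (hgradH : frob ((2 : ℝ) • ((Y * Yᵀ - X) * Y)) ≤ α * μ * (sval Ystar r) ^ 3 / (4 * κ))
    (hspec : sval Y 1 ≤ β * sval Ystar 1)
    (hfrobYY : frob (Y * Yᵀ) ≤ γ * frob X)
    (Q : Matrix (Fin r) (Fin r) ℝ) (hQ : IsOrtho Q)
    (hQmin : ∀ O : Matrix (Fin r) (Fin r) ℝ, IsOrtho O →
      frob (Y - Ystar * Q) ≤ frob (Y - Ystar * O))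
    (θ : Matrix (Fin p) (Fin r) ℝ) (hθ : θ = Y - Ystar * Q) :
    hessf (Y * Yᵀ) (Y * θᵀ + θ * Yᵀ) + 2 * trInner (gradf (Y * Yᵀ)) (θ * θᵀ) ≤
      ((α - 2 * (Real.sqrt 2 - 1)) * (sval Ystar r) ^ 2 +
        2 * δ * (2 * β ^ 2 * (sval Ystar 1) ^ 2 + (1 + γ) * frob X) + 2 * N) *
        (frob θ) ^ 2 ∧
    (α < 2 * (Real.sqrt 2 - 1) →
      δ ≤ (2 * (Real.sqrt 2 - 1) - α) * (sval Ystar r) ^ 2 /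
        (8 * (2 * β ^ 2 * (sval Ystar 1) ^ 2 + (1 + γ) * frob X)) →
      N ≤ (2 * (Real.sqrt 2 - 1) - α) * (sval Ystar r) ^ 2 / 8 →
      hessf (Y * Yᵀ) (Y * θᵀ + θ * Yᵀ) + 2 * trInner (gradf (Y * Yᵀ)) (θ * θᵀ) ≤
        ((α - 2 * (Real.sqrt 2 - 1)) / 2) * (sval Ystar r) ^ 2 * (frob θ) ^ 2 ∧
      hessf (Y * Yᵀ) (Y * θᵀ + θ * Yᵀ) + 2 * trInner (gradf (Y * Yᵀ)) (θ * θᵀ) < 0) :=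
  stmt14_general f gradf hessf hgradf hhessf δ hδ0 (fun A G hA hG => hRSCS A G hA (by lia))
    Ystar hYs X hX N hN κ hκ μ α β γ hμ0 hα0 Y hd hgradH hspec hfrobYY Q hQ hQmin θ hθ
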